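/- For k₀ = 1 and c > 0, the function M(r) = (3c + √(3c² + 6cr³))/((r³ − c)r) defined for r > 0, r³ ≠ c, satisfies the k₀ = 1 reduced ODE obtained by substituting N = (−M²r − 2M)/(2 + 2Mr) into the field equations, i.e., M solves the resulting first-order ODE for M. -/

import Mathlib

theorem k0_eq_one_explicit_solution (c : ℝ) (hc : 0 < c)
    (M N : ℝ → ℝ)
    (hM : M = fun r => (3*c + Real.sqrt (3*c^2 + 6*c*r^3)) / ((r^3 - c) * r))
    (hN : N = fun r => (-(M r)^2 * r - 2 * M r) / (2 + 2 * M r * r)) :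
    ∀ r : ℝ, 0 < r → r^3 ≠ c →
      ((M r)^2 + 2 * M r * N r + (M r + N r) / r
        - (1/2) * (deriv N r + (N r)^2 + deriv M r) = 0)
      ∧
      ((M r)^2 - deriv M r - (deriv N r + (N r)^2) + 2 * M r * N r = 0) := by
  intro r hr hrc
  have hr0 : r ≠ 0 := hr.ne'
  have key : ∀ y : ℝ, 0 < y → y^3 ≠ c →
      (M y * y)^2 * (y^3 - c) - 6*c*(M y * y) - 6*c = 0 := by
    intro y hy hyc
    have h1 : y^3 - c ≠ 0 := sub_ne_zero.mpr hyc
    have hs := Real.sq_sqrt (show (0:ℝ) ≤ 3*c^2 + 6*c*y^3 by positivity)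
    have hu : M y * y * (y^3 - c) = 3*c + Real.sqrt (3*c^2 + 6*c*y^3) := by
      rw [hM]; field_simp
    apply mul_left_cancel₀ h1
    generalize Real.sqrt (3*c^2 + 6*c*y^3) = s at *
    linear_combination (M y * y * (y^3 - c) - 3*c + s) * hu + hs
  have h1 : r^3 - c ≠ 0 := sub_ne_zero.mpr hrc
  have hdM : DifferentiableAt ℝ M r := by
    rw [hM]
    have : 3*c^2 + 6*c*r^3 ≠ 0 := by positivity
    have h2 : (r^3 - c) * r ≠ 0 := mul_ne_zero h1 hr0
    fun_prop (disch := assumption)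
  have hm := hdM.hasDerivAt
  set m := deriv M r with hmdef
  have hk := key r hr hrc
  have hu' : HasDerivAt (fun y => M y * y) (m * r + M r * 1) r := hm.mul (hasDerivAt_id r)
  have hF := (((hu'.pow 2).mul ((hasDerivAt_pow 3 r).sub_const c)).sub
    (hu'.const_mul (6*c))).sub_const (6*c)
  have hev : (fun y : ℝ => (0:ℝ)) =ᶠ[nhds r]
      (fun y => (M y * y)^2 * (y^3 - c) - 6*c*(M y * y) - 6*c) := by
    have e2 : ∀ᶠ y in nhds r, y^3 ≠ c :=
      (continuous_pow 3).continuousAt.eventually_ne hrc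
    filter_upwards [lt_mem_nhds hr, e2] with y hy hy2
    exact (key y hy hy2).symm
  have hD := (HasDerivAt.congr_of_eventuallyEq hF hev).unique (hasDerivAt_const r (0:ℝ))
  simp at hD
  have hr3 : 0 < r^3 := by positivity
  have hu0 : M r * r ≠ 0 := by
    intro h; rw [h] at hk; nlinarith
  have hu1 : 1 + M r * r ≠ 0 := by
    intro h
    have : M r * r = -1 := by linarith
    rw [this] at hk; apply hrc; linarith
  have hu2 : M r * r + 2 ≠ 0 := by
    intro h
    have : M r * r = -2 := by linarith
    rw [this] at hk; nlinarith
  have hode : 2 * r * (m * r + M r) * (M r * r + 2)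
      = -(M r * r) * ((M r * r)^2 + 6 * (M r * r) + 6) := by
    generalize m * r + M r = d at *
    generalize M r * r = u at *
    have hcu : c * u ≠ 0 := mul_ne_zero hc.ne' hu0
    have e : 6 * c * d * (u+2) = -3*r^2*u^3 := by
      linear_combination u * hD - 2 * d * hk
    apply mul_left_cancel₀ hc.ne'
    linear_combination (r/3) * e - u * hk
  have hden : 2 + 2 * M r * r ≠ 0 := by
    intro h; apply hu1; linarith
  have hdN : HasDerivAt N (((-(2 * M r * m) * r - (M r)^2 - 2 * m) * (2 + 2 * M r * r)
      - (-(M r)^2 * r - 2 * M r) * (2 * m * r + 2 * M r)) / (2 + 2 * M r * r)^2) r := by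
    rw [hN]
    have h := ((((hm.pow 2).neg).mul (hasDerivAt_id r)).sub (hm.const_mul 2)).div
      (((hm.const_mul 2).mul (hasDerivAt_id r)).const_add 2) hden
    refine HasDerivAt.congr_deriv h ?_
    simp
    ring
  have hNr : N r = (-(M r)^2 * r - 2 * M r) / (2 + 2 * M r * r) := by rw [hN]
  rw [hdN.deriv, hNr]
  have hmm : m = (-(M r * r) * ((M r * r)^2 + 6 * (M r * r) + 6) / (2 * r * (M r * r + 2)) - M r) / r := by
    rw [eq_div_iff hr0, eq_sub_iff_add_eq,
      eq_div_iff (mul_ne_zero (mul_ne_zero two_ne_zero hr0) hu2)]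
    linear_combination hode
  clear_value m
  subst hmm
  generalize M r = a at *
  have hd2 : 1 + a * r ≠ 0 := hu1
  have e : 2 + 2 * a * r = 2 * (1 + a * r) := by ring
  rw [e]
  constructor
  · field_simp
    ring
  · field_simp
    ring
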